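/- Let p be an odd prime, n ≥ 2, q = p^n, and let K be a field of characteristic p. With A = K[M] the group algebra of M = ZMod q × ZMod q, let P_• be the explicit complex of free A-modules with differential ∂, let α be the σ-semilinear degree-0 map, and let τ be the A-linear degree +1 map given by the explicit formulas. Then for every k and every x ∈ P_k: ∂(τ(x)) + τ(∂(x)) = x − α^{q}(x), where α^{q} denotes the q-fold composite of α (which is A-linear since σ^q = id). -/

import Mathlib

noncomputable section

open MonoidAlgebra Finset

/-- The group `M = ZMod q × ZMod q`, written multiplicatively. -/
abbrev Mgrp (q : ℕ) : Type := Multiplicative (ZMod q × ZMod q)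

/-- The group algebra `A = K[M]`. -/
abbrev GrpAlg (K : Type) [Field K] (q : ℕ) : Type := MonoidAlgebra K (Mgrp q)

variable (K : Type) [Field K] (q : ℕ)

/-- The generator `a = (1,0)` of `M`, as an element of `K[M]`. -/
def aEl : GrpAlg K q := MonoidAlgebra.of K (Mgrp q) (Multiplicative.ofAdd (1, 0))

/-- The generator `b = (0,1)` of `M`, as an element of `K[M]`. -/
def bEl : GrpAlg K q := MonoidAlgebra.of K (Mgrp q) (Multiplicative.ofAdd (0, 1))

/-- `N(x) = ∑_{i=0}^{q−1} x^i`. -/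
def Nel (x : GrpAlg K q) : GrpAlg K q := ∑ i ∈ range q, x ^ i

/-- `ρ = ∑_{0 ≤ j ≤ i ≤ q−1} a^i b^j`. -/
def ρEl : GrpAlg K q :=
  ∑ ij ∈ (range q ×ˢ range q).filter (fun ij => ij.2 ≤ ij.1), aEl K q ^ ij.1 * bEl K q ^ ij.2

/-- `κ = ∑_{i=0}^{q−1} (i+1)·a^i`, with coefficients `(i+1)` taken in `K`. -/
def κEl : GrpAlg K q := ∑ i ∈ range q, ((i : K) + 1) • aEl K q ^ i

/-- The group automorphism `(i,j) ↦ (i, i+j)` of `M` (i.e. `a ↦ ab`, `b ↦ b`). -/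
def sigmaGrp (q : ℕ) : Mgrp q ≃* Mgrp q :=
  AddEquiv.toMultiplicative
    { toFun := fun x => (x.1, x.1 + x.2)
      invFun := fun x => (x.1, x.2 - x.1)
      left_inv := fun x => by simp
      right_inv := fun x => by simp
      map_add' := fun x y => by simp [Prod.ext_iff]; ring }

/-- The `K`-algebra automorphism `σ` of `A = K[M]` induced by the group automorphism
`a ↦ ab`, `b ↦ b` of `M`. -/
def σAlg : GrpAlg K q ≃ₐ[K] GrpAlg K q := MonoidAlgebra.domCongr K K (sigmaGrp q)

/-- `P_k`: the free `A`-module with basis `e_0^k, …, e_k^k`. -/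
abbrev PmodV (k : ℕ) : Type := Fin (k + 1) → GrpAlg K q

/-- The basis element `e_j^k` of `P_k`, indexed by `j : ℤ`, with the convention that
`e_j^k = 0` when `j < 0` or `j > k`. -/
def eZ (k : ℕ) (j : ℤ) : PmodV K q k :=
  if h : 0 ≤ j ∧ j < (k : ℤ) + 1 then Pi.single (⟨j.toNat, by omega⟩ : Fin (k + 1)) 1 else 0

/-- The image under the differential `∂ : P_{k+1} → P_k` of the basis element
`e_idx^{k+1}`, following the parity of the degree `k+1` and of the index `idx`:
`∂(e_{2j}^{2i}) = N(a)·e_{2j}^{2i−1} + N(b)·e_{2j−1}^{2i−1}`,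
`∂(e_{2j+1}^{2i}) = (a−1)·e_{2j+1}^{2i−1} − (b−1)·e_{2j}^{2i−1}`,
`∂(e_{2j}^{2i+1}) = (a−1)·e_{2j}^{2i} − N(b)·e_{2j−1}^{2i}`,
`∂(e_{2j+1}^{2i+1}) = N(a)·e_{2j+1}^{2i} + (b−1)·e_{2j}^{2i}`. -/
def delB (k idx : ℕ) : PmodV K q k :=
  if (k + 1) % 2 = 0 then
    if idx % 2 = 0 then
      Nel K q (aEl K q) • eZ K q k (idx : ℤ) + Nel K q (bEl K q) • eZ K q k ((idx : ℤ) - 1)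
    else
      (aEl K q - 1) • eZ K q k (idx : ℤ) - (bEl K q - 1) • eZ K q k ((idx : ℤ) - 1)
  else
    if idx % 2 = 0 then
      (aEl K q - 1) • eZ K q k (idx : ℤ) - Nel K q (bEl K q) • eZ K q k ((idx : ℤ) - 1)
    else
      Nel K q (aEl K q) • eZ K q k (idx : ℤ) + (bEl K q - 1) • eZ K q k ((idx : ℤ) - 1)

/-- The `A`-linear differential `∂ : P_{k+1} → P_k`. -/
def delMap (k : ℕ) (x : PmodV K q (k + 1)) : PmodV K q k :=
  ∑ j : Fin (k + 2), x j • delB K q k j.val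

/-- The image under `α : P_d → P_d` of the basis element `e_idx^d`:
`α(e_{2j}^{2i}) = ∑_{j ≤ m ≤ i} C(m,j)·(e_{2m}^{2i} − ρ·e_{2m+1}^{2i})`,
`α(e_{2j+1}^{2i}) = ∑_{j ≤ m ≤ i} C(m,j)·b·e_{2m+1}^{2i}`,
`α(e_{2j}^{2i+1}) = ∑_{j ≤ m ≤ i} C(m,j)·(b·e_{2m}^{2i+1} + e_{2m+1}^{2i+1})`,
`α(e_{2j+1}^{2i+1}) = ∑_{j ≤ m ≤ i} C(m,j)·e_{2m+1}^{2i+1}`,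
with binomial coefficients taken in `K`. -/
def alphaB (d idx : ℕ) : PmodV K q d :=
  if d % 2 = 0 then
    if idx % 2 = 0 then
      ∑ m ∈ Finset.Icc (idx / 2) (d / 2), (m.choose (idx / 2) : K) •
        (eZ K q d (2 * m : ℕ) - ρEl K q • eZ K q d ((2 * m : ℕ) + 1))
    else
      ∑ m ∈ Finset.Icc (idx / 2) (d / 2), (m.choose (idx / 2) : K) •
        (bEl K q • eZ K q d ((2 * m : ℕ) + 1))
  else
    if idx % 2 = 0 then
      ∑ m ∈ Finset.Icc (idx / 2) (d / 2), (m.choose (idx / 2) : K) •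
        (bEl K q • eZ K q d (2 * m : ℕ) + eZ K q d ((2 * m : ℕ) + 1))
    else
      ∑ m ∈ Finset.Icc (idx / 2) (d / 2), (m.choose (idx / 2) : K) •
        eZ K q d ((2 * m : ℕ) + 1)

/-- The `σ`-semilinear map `α : P_d → P_d` (it satisfies `α(λ·x) = σ(λ)·α(x)`). -/
def alphaMap (d : ℕ) (x : PmodV K q d) : PmodV K q d :=
  ∑ j : Fin (d + 1), σAlg K q (x j) • alphaB K q d j.val

/-- The image under `τ : P_d → P_{d+1}` of the basis element `e_idx^d`:
`τ(e_{2j}^{2i}) = −(j+1)·κ·e_{2j+2}^{2i+1}`, `τ(e_{2j+1}^{2i}) = −(j+1)·e_{2j+3}^{2i+1}`,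
`τ(e_{2j}^{2i+1}) = −(j+1)·e_{2j+2}^{2i+2}`, `τ(e_{2j+1}^{2i+1}) = −(j+1)·κ·e_{2j+3}^{2i+2}`,
with the coefficients `j+1` taken in `K`. -/
def tauB (d idx : ℕ) : PmodV K q (d + 1) :=
  if d % 2 = 0 then
    if idx % 2 = 0 then
      -(((idx / 2 : ℕ) + 1 : K) • (κEl K q • eZ K q (d + 1) ((idx : ℤ) + 2)))
    else
      -(((idx / 2 : ℕ) + 1 : K) • eZ K q (d + 1) ((idx : ℤ) + 2))
  else
    if idx % 2 = 0 then
      -(((idx / 2 : ℕ) + 1 : K) • eZ K q (d + 1) ((idx : ℤ) + 2))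
    else
      -(((idx / 2 : ℕ) + 1 : K) • (κEl K q • eZ K q (d + 1) ((idx : ℤ) + 2)))

/-- The `A`-linear map `τ : P_d → P_{d+1}`. -/
def tauMap (d : ℕ) (x : PmodV K q d) : PmodV K q (d + 1) :=
  ∑ j : Fin (d + 1), x j • tauB K q d j.val


section helpers

variable {K q}

lemma h_eZ_nat (d : ℕ) (j : ℕ) (h : j < d + 1) : eZ K q d (j : ℤ) = Pi.single ⟨j, h⟩ 1 := by
  unfold eZ
  exact dif_pos (by omega)

lemma h_eZ_big (d : ℕ) (j : ℤ) (h : (d : ℤ) < j) : eZ K q d j = 0 := by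
  unfold eZ
  rw [dif_neg (by omega)]

lemma h_eZ_neg (d : ℕ) (j : ℤ) (h : j < 0) : eZ K q d j = 0 := by
  unfold eZ
  rw [dif_neg (by omega)]

lemma h_decomp (d : ℕ) (x : PmodV K q d) : x = ∑ j : Fin (d + 1), x j • eZ K q d (j.val : ℤ) := by
  conv_lhs => rw [pi_eq_sum_univ' x]
  refine Finset.sum_congr rfl fun j _ => ?_
  rw [h_eZ_nat d j.val j.isLt]

variable (K q) in
/-- differential as a linear map -/
def delL (k : ℕ) : PmodV K q (k + 1) →ₗ[GrpAlg K q] PmodV K q k where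
  toFun := delMap K q k
  map_add' x y := by simp [delMap, add_smul, Finset.sum_add_distrib]
  map_smul' c x := by simp only [delMap, Pi.smul_apply, smul_eq_mul, mul_smul, Finset.smul_sum, RingHom.id_apply]

variable (K q) in
/-- homotopy as a linear map -/
def tauL (k : ℕ) : PmodV K q k →ₗ[GrpAlg K q] PmodV K q (k + 1) where
  toFun := tauMap K q k
  map_add' x y := by simp [tauMap, add_smul, Finset.sum_add_distrib]
  map_smul' c x := by simp only [tauMap, Pi.smul_apply, smul_eq_mul, mul_smul, Finset.smul_sum, RingHom.id_apply]

variable (K q) in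
/-- alpha as a semilinear map -/
def alphaL (k : ℕ) :
    PmodV K q k →ₛₗ[((σAlg K q : GrpAlg K q ≃+* GrpAlg K q) : GrpAlg K q →+* GrpAlg K q)] PmodV K q k where
  toFun := alphaMap K q k
  map_add' x y := by simp [alphaMap, add_smul, Finset.sum_add_distrib]
  map_smul' c x := by simp [alphaMap, mul_smul, Finset.smul_sum]

lemma delL_e (k j : ℕ) : delL K q k (eZ K q (k + 1) (j : ℤ)) = delB K q k j := by
  by_cases h : j < k + 1 + 1
  · rw [h_eZ_nat _ _ h]
    change delMap K q k _ = _
    simp [delMap, Pi.single_apply, ite_smul]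
  · rw [h_eZ_big _ _ (by push_cast; omega)]
    have h1 : eZ K q k (j : ℤ) = 0 := h_eZ_big _ _ (by omega)
    have h2 : eZ K q k ((j : ℤ) - 1) = 0 := h_eZ_big _ _ (by omega)
    simp [delB, h1, h2]

lemma tauL_e (k j : ℕ) : tauL K q k (eZ K q k (j : ℤ)) = tauB K q k j := by
  by_cases h : j < k + 1
  · rw [h_eZ_nat _ _ h]
    change tauMap K q k _ = _
    simp [tauMap, Pi.single_apply, ite_smul]
  · rw [h_eZ_big _ _ (by omega)]
    have h1 : eZ K q (k + 1) ((j : ℤ) + 2) = 0 := h_eZ_big _ _ (by push_cast; omega)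
    simp [tauB, h1]

lemma alphaL_e (k j : ℕ) (h : j < k + 1) : alphaL K q k (eZ K q k (j : ℤ)) = alphaB K q k j := by
  rw [h_eZ_nat _ _ h]
  change alphaMap K q k _ = _
  unfold alphaMap
  rw [Finset.sum_eq_single ⟨j, h⟩]
  · simp
  · intro b _ hb
    simp [Pi.single_apply, hb]
  · simp

variable (K) in
/-- entries of powers of the Pascal matrix -/
def tc (n l j : ℕ) : K := (n : K) ^ (l - j) * (l.choose j : K)

lemma tc_mul (n l j I : ℕ) (hl : l ≤ I) :
    ∑ m ∈ range (I + 1), tc K n m j * (l.choose m : K) = tc K (n + 1) l j := by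
  have h1 : ∑ m ∈ range (I + 1), tc K n m j * (l.choose m : K)
      = ∑ m ∈ Finset.Icc j l, tc K n m j * (l.choose m : K) := by
    symm
    apply Finset.sum_subset_zero_on_sdiff
    · intro m hm; simp at hm ⊢; omega
    · intro m hm
      simp only [mem_sdiff, mem_range, Finset.mem_Icc, not_and_or, not_le] at hm
      rcases hm.2 with h | h
      · simp [tc, Nat.choose_eq_zero_of_lt h]
      · simp [Nat.choose_eq_zero_of_lt h]
    · intros; rfl
  rw [h1]
  by_cases hj : j ≤ l
  · obtain ⟨e, rfl⟩ := Nat.exists_eq_add_of_le hj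
    unfold tc
    push_cast
    rw [Nat.add_sub_cancel_left, add_pow, Finset.sum_mul, ← Finset.Ico_succ_right_eq_Icc,
      Finset.sum_Ico_eq_sum_range]
    have : Order.succ (j + e) - j = e + 1 := by simp [Order.succ]; omega
    rw [this]
    refine Finset.sum_congr rfl fun m hm => ?_
    simp only [mem_range] at hm
    have h2 := Nat.choose_mul (n := j + e) (k := j + m) (s := j) (by omega)
    rw [Nat.add_sub_cancel_left, Nat.add_sub_cancel_left] at h2
    have h3 : ((j + e).choose (j + m) : K) * ((j + m).choose j : K) = ((j + e).choose j : K) * (e.choose m : K) := by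
      rw [← Nat.cast_mul, ← Nat.cast_mul, h2]
    rw [Nat.add_sub_cancel_left, one_pow]
    linear_combination (n : K) ^ m * h3
  · rw [Finset.Icc_eq_empty (by omega)]
    simp [tc, Nat.choose_eq_zero_of_lt (not_le.mp hj)]

lemma tc_zero (l j : ℕ) : tc K 0 l j = if l = j then 1 else 0 := by
  unfold tc
  rcases lt_trichotomy l j with h | h | h
  · simp [Nat.choose_eq_zero_of_lt h, h.ne]
  · simp [h]
  · have : l - j ≠ 0 := by omega
    simp [this, h.ne']

lemma alpha_K_smul (d : ℕ) (c : K) (x : PmodV K q d) : alphaL K q d (c • x) = c • alphaL K q d x := by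
  rw [← algebraMap_smul (GrpAlg K q) c x, LinearMap.map_smulₛₗ,
    ← algebraMap_smul (GrpAlg K q) c (alphaL K q d x)]
  congr 1
  exact (σAlg K q).commutes c

lemma alpha_iter (d I : ℕ) (U V : ℕ → PmodV K q d) (r s g : GrpAlg K q) (c : ℕ → GrpAlg K q)
    (hU : ∀ m ≤ I, alphaL K q d (U m) = ∑ l ∈ range (I + 1), (l.choose m : K) • (r • U l + g • V l))
    (hV : ∀ m ≤ I, alphaL K q d (V m) = ∑ l ∈ range (I + 1), (l.choose m : K) • (s • V l))
    (hr : σAlg K q r = r) (hc0 : c 0 = 0) (hc : ∀ n, c (n + 1) = r ^ n * g + σAlg K q (c n) * s)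
    (n m : ℕ) (hm : m ≤ I) :
    (alphaMap K q d)^[n] (U m) = ∑ l ∈ range (I + 1), tc K n l m • (r ^ n • U l + c n • V l) := by
  induction n with
  | zero =>
    simp [tc_zero, hc0, ite_smul, Nat.lt_succ_of_le hm]
  | succ n ih =>
    rw [Function.iterate_succ_apply', ih]
    change alphaL K q d _ = _
    rw [map_sum]
    have step : ∀ l ∈ range (I + 1), alphaL K q d (tc K n l m • (r ^ n • U l + c n • V l))
        = ∑ k ∈ range (I + 1), (tc K n l m * (k.choose l : K)) • (r ^ (n + 1) • U k + c (n + 1) • V k) := by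
      intro l hl
      have hl' : l ≤ I := by simp at hl; omega
      rw [alpha_K_smul, map_add, LinearMap.map_smulₛₗ, LinearMap.map_smulₛₗ, hU l hl', hV l hl',
        Finset.smul_sum, Finset.smul_sum, ← Finset.sum_add_distrib, Finset.smul_sum]
      refine Finset.sum_congr rfl fun k _ => ?_
      rw [mul_smul]
      congr 1
      rw [smul_comm _ (k.choose l : K), smul_comm _ (k.choose l : K), ← smul_add]
      congr 1
      simp only [map_pow, RingHom.coe_coe, AlgEquiv.coe_ringEquiv, hr, hc, smul_add, smul_smul, add_smul, pow_succ]
      abel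
    rw [Finset.sum_congr rfl step, Finset.sum_comm]
    refine Finset.sum_congr rfl fun k hk => ?_
    rw [← Finset.sum_smul, tc_mul n k m I (by simp at hk; omega)]

lemma tc_q (hq0 : (q : K) = 0) (l j : ℕ) : tc K q l j = if l = j then 1 else 0 := by
  rw [← tc_zero]; simp [tc, hq0]

lemma alpha_q (hq0 : (q : K) = 0) (d I : ℕ) (U V : ℕ → PmodV K q d) (r s g : GrpAlg K q) (c : ℕ → GrpAlg K q)
    (hU : ∀ m ≤ I, alphaL K q d (U m) = ∑ l ∈ range (I + 1), (l.choose m : K) • (r • U l + g • V l))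
    (hV : ∀ m ≤ I, alphaL K q d (V m) = ∑ l ∈ range (I + 1), (l.choose m : K) • (s • V l))
    (hr : σAlg K q r = r) (hc0 : c 0 = 0) (hc : ∀ n, c (n + 1) = r ^ n * g + σAlg K q (c n) * s)
    (m : ℕ) (hm : m ≤ I) (hrq : r ^ q = 1) :
    (alphaMap K q d)^[q] (U m) = U m + c q • V m := by
  rw [alpha_iter d I U V r s g c hU hV hr hc0 hc q m hm]
  simp only [tc_q hq0, ite_smul, one_smul, zero_smul, hrq]
  rw [Finset.sum_ite_eq' ]
  simp [Nat.lt_succ_of_le hm]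

lemma sigma_b : σAlg K q (bEl K q) = bEl K q := by
  simp [σAlg, bEl, sigmaGrp, MonoidAlgebra.domCongr_single]

lemma sigma_a : σAlg K q (aEl K q) = aEl K q * bEl K q := by
  simp [σAlg, aEl, bEl, sigmaGrp, MonoidAlgebra.domCongr_single, MonoidAlgebra.single_mul_single, ← ofAdd_add]

lemma a_pow : aEl K q ^ q = 1 := by
  unfold aEl
  rw [← map_pow, ← ofAdd_nsmul]
  simp [MonoidAlgebra.one_def]
  rfl

lemma b_pow : bEl K q ^ q = 1 := by
  unfold bEl
  rw [← map_pow, ← ofAdd_nsmul]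
  simp [MonoidAlgebra.one_def]
  rfl

lemma sigma_iter (n : ℕ) (x y : ZMod q) (k : K) :
    (σAlg K q)^[n] (MonoidAlgebra.single (Multiplicative.ofAdd (x, y)) k) =
      MonoidAlgebra.single (Multiplicative.ofAdd (x, n * x + y)) k := by
  induction n with
  | zero => simp
  | succ n ih =>
    rw [Function.iterate_succ_apply', ih]
    simp [σAlg, sigmaGrp, MonoidAlgebra.domCongr_single]
    congr 3
    ring

lemma sigma_iter_add (n : ℕ) (x y : GrpAlg K q) :
    (σAlg K q)^[n] (x + y) = (σAlg K q)^[n] x + (σAlg K q)^[n] y := by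
  induction n with
  | zero => simp
  | succ n ih => simp only [Function.iterate_succ_apply', ih, map_add]

lemma sigma_q (x : GrpAlg K q) : (σAlg K q)^[q] x = x := by
  induction x using MonoidAlgebra.induction_linear with
  | zero => exact Function.iterate_fixed (map_zero _) _
  | add f g hf hg => rw [sigma_iter_add, hf, hg]
  | single m k =>
    have := sigma_iter (K := K) q (Multiplicative.toAdd m).1 (Multiplicative.toAdd m).2 k
    simpa using this

lemma alpha_iter_smul (d n : ℕ) (c : GrpAlg K q) (x : PmodV K q d) :
    (alphaMap K q d)^[n] (c • x) = (σAlg K q)^[n] c • (alphaMap K q d)^[n] x := by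
  induction n with
  | zero => simp
  | succ n ih =>
    simp only [Function.iterate_succ_apply', ih]
    exact (alphaL K q d).map_smulₛₗ _ _

lemma alpha_iter_add (d n : ℕ) (x y : PmodV K q d) :
    (alphaMap K q d)^[n] (x + y) = (alphaMap K q d)^[n] x + (alphaMap K q d)^[n] y := by
  induction n with
  | zero => simp
  | succ n ih =>
    simp only [Function.iterate_succ_apply', ih]
    exact (alphaL K q d).map_add _ _

variable (K q) in
/-- the q-th power of alpha as a linear map -/
def alphaQ (d : ℕ) : PmodV K q d →ₗ[GrpAlg K q] PmodV K q d where
  toFun := (alphaMap K q d)^[q]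
  map_add' := alpha_iter_add d q
  map_smul' c x := by rw [alpha_iter_smul, sigma_q]; rfl

lemma lin_ext (d : ℕ) {N : Type} [AddCommGroup N] [Module (GrpAlg K q) N]
    (f g : PmodV K q d →ₗ[GrpAlg K q] N)
    (h : ∀ j : ℕ, j ≤ d → f (eZ K q d (j : ℤ)) = g (eZ K q d (j : ℤ))) (x : PmodV K q d) : f x = g x := by
  rw [h_decomp d x, map_sum, map_sum]
  refine Finset.sum_congr rfl fun j _ => ?_
  rw [map_smul, map_smul, h j.val (by omega)]

lemma choose_sum {N : Type} [AddCommGroup N] [Module K N] (m I : ℕ) (f : ℕ → N) :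
    ∑ l ∈ Finset.Icc m I, (l.choose m : K) • f l = ∑ l ∈ range (I + 1), (l.choose m : K) • f l := by
  apply Finset.sum_subset
  · intro l hl; simp at hl ⊢; omega
  · intro l hl hl'
    simp at hl hl'
    have : l < m := by by_contra h; have := hl' (by omega); omega
    simp [Nat.choose_eq_zero_of_lt this]

lemma rho_eq : ρEl K q = ∑ i ∈ range q, aEl K q ^ i * ∑ t ∈ range (i + 1), bEl K q ^ t := by
  unfold ρEl
  rw [Finset.sum_filter, Finset.sum_product]
  refine Finset.sum_congr rfl fun i hi => ?_
  rw [← Finset.sum_filter, Finset.mul_sum]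
  refine Finset.sum_congr ?_ fun _ _ => rfl
  ext t; simp at hi ⊢; omega

lemma geom_q (m : ℕ) : ∑ t ∈ range (q * m), bEl K q ^ t = (m : K) • Nel K q (bEl K q) := by
  induction m with
  | zero => simp
  | succ m ih =>
    rw [Nat.mul_succ, Finset.sum_range_add, ih]
    simp only [pow_add, pow_mul, b_pow, one_pow, one_mul]
    push_cast
    rw [add_smul, one_smul]; rfl

lemma kappa_a (hq0 : (q : K) = 0) : (aEl K q - 1) * κEl K q = - Nel K q (aEl K q) := by
  have key : ∀ n : ℕ, (aEl K q - 1) * ∑ i ∈ range n, ((i : K) + 1) • aEl K q ^ i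
      = (n : K) • aEl K q ^ n - ∑ i ∈ range n, aEl K q ^ i := by
    intro n
    induction n with
    | zero => simp
    | succ n ih =>
      rw [Finset.sum_range_succ, mul_add, ih, Finset.sum_range_succ, mul_smul_comm, sub_mul, ← pow_succ', one_mul]
      push_cast
      module
  unfold κEl
  rw [key, hq0, zero_smul, zero_sub]; rfl

/-- even-degree correction coefficients -/
def cE (K : Type) [Field K] (q n : ℕ) : GrpAlg K q :=
  - ∑ i ∈ range q, aEl K q ^ i * ∑ t ∈ range (n * (i + 1)), bEl K q ^ t

lemma cE_succ (n : ℕ) : cE K q (n + 1) = 1 ^ n * (- ρEl K q) + σAlg K q (cE K q n) * bEl K q := by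
  unfold cE
  rw [rho_eq, one_pow, one_mul, map_neg, neg_mul, ← neg_add, neg_inj, map_sum, Finset.sum_mul, ← Finset.sum_add_distrib]
  refine Finset.sum_congr rfl fun i _ => ?_
  rw [map_mul, map_pow, map_sum, sigma_a]
  simp only [map_pow, sigma_b]
  rw [Nat.succ_mul, add_comm (n * (i + 1)), Finset.sum_range_add]
  simp only [pow_add (bEl K q) (i + 1)]
  rw [← Finset.mul_sum]
  ring

lemma cE_q : cE K q q = - (κEl K q * Nel K q (bEl K q)) := by
  unfold cE κEl
  rw [Finset.sum_mul, neg_inj]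
  refine Finset.sum_congr rfl fun i _ => ?_
  rw [geom_q]
  push_cast
  rw [mul_smul_comm, smul_mul_assoc]

lemma aEU (i m : ℕ) (hm : m ≤ i) : alphaL K q (2 * i) (eZ K q (2 * i) (2 * m : ℕ)) =
    ∑ l ∈ range (i + 1), (l.choose m : K) • ((1 : GrpAlg K q) • eZ K q (2 * i) (2 * l : ℕ)
      + (- ρEl K q) • eZ K q (2 * i) ((2 * l : ℕ) + 1)) := by
  rw [alphaL_e _ _ (by omega), alphaB, if_pos (by omega), if_pos (by omega)]
  rw [show 2 * m / 2 = m by omega, show 2 * i / 2 = i by omega, choose_sum]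
  simp only [one_smul, neg_smul, sub_eq_add_neg]

lemma aEV (i m : ℕ) (hm : m ≤ i) : alphaL K q (2 * i) (eZ K q (2 * i) ((2 * m : ℕ) + 1)) =
    ∑ l ∈ range (i + 1), (l.choose m : K) • (bEl K q • eZ K q (2 * i) ((2 * l : ℕ) + 1)) := by
  rcases hm.lt_or_eq with h | h
  · have := alphaL_e (K := K) (q := q) (2 * i) (2 * m + 1) (by omega)
    rw [alphaB, if_pos (by omega), if_neg (by omega), show (2 * m + 1) / 2 = m by omega,
      show 2 * i / 2 = i by omega, choose_sum] at this
    exact_mod_cast this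
  · subst h
    rw [h_eZ_big _ _ (by omega), map_zero]
    symm
    apply Finset.sum_eq_zero
    intro l hl
    simp only [mem_range] at hl
    rcases (Nat.lt_succ_iff.mp hl).lt_or_eq with h | h
    · simp [Nat.choose_eq_zero_of_lt h]
    · subst h
      rw [h_eZ_big _ _ (by omega)]; simp

lemma aOU (i m : ℕ) (hm : m ≤ i) : alphaL K q (2 * i + 1) (eZ K q (2 * i + 1) (2 * m : ℕ)) =
    ∑ l ∈ range (i + 1), (l.choose m : K) • (bEl K q • eZ K q (2 * i + 1) (2 * l : ℕ)
      + (1 : GrpAlg K q) • eZ K q (2 * i + 1) ((2 * l : ℕ) + 1)) := by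
  rw [alphaL_e _ _ (by omega), alphaB, if_neg (by omega), if_pos (by omega)]
  rw [show 2 * m / 2 = m by omega, show (2 * i + 1) / 2 = i by omega, choose_sum]
  simp only [one_smul]

lemma aOV (i m : ℕ) (hm : m ≤ i) : alphaL K q (2 * i + 1) (eZ K q (2 * i + 1) ((2 * m : ℕ) + 1)) =
    ∑ l ∈ range (i + 1), (l.choose m : K) • ((1 : GrpAlg K q) • eZ K q (2 * i + 1) ((2 * l : ℕ) + 1)) := by
  have := alphaL_e (K := K) (q := q) (2 * i + 1) (2 * m + 1) (by omega)
  rw [alphaB, if_neg (by omega), if_neg (by omega), show (2 * m + 1) / 2 = m by omega,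
    show (2 * i + 1) / 2 = i by omega, choose_sum] at this
  simp only [one_smul]
  exact_mod_cast this

lemma even_U (hq0 : (q : K) = 0) (i m : ℕ) (hm : m ≤ i) :
    alphaQ K q (2 * i) (eZ K q (2 * i) (2 * m : ℕ)) = eZ K q (2 * i) (2 * m : ℕ)
      - (κEl K q * Nel K q (bEl K q)) • eZ K q (2 * i) ((2 * m : ℕ) + 1) := by
  have := alpha_q hq0 (2 * i) i (fun l => eZ K q (2 * i) (2 * l : ℕ))
    (fun l => eZ K q (2 * i) ((2 * l : ℕ) + 1)) 1 (bEl K q) (- ρEl K q) (cE K q)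
    (aEU i) (aEV i) (map_one _) (by simp [cE]) cE_succ m hm (one_pow _)
  rw [cE_q, neg_smul, ← sub_eq_add_neg] at this
  exact this

lemma even_V (hq0 : (q : K) = 0) (i m : ℕ) (hm : m ≤ i) :
    alphaQ K q (2 * i) (eZ K q (2 * i) ((2 * m : ℕ) + 1)) = eZ K q (2 * i) ((2 * m : ℕ) + 1) := by
  have := alpha_q hq0 (2 * i) i (fun l => eZ K q (2 * i) ((2 * l : ℕ) + 1))
    (fun l => 0) (bEl K q) 1 0 (fun _ => 0)
    (fun m hm => by rw [aEV i m hm]; simp) (fun m _ => by rw [map_zero]; simp) sigma_b rfl (by simp) m hm b_pow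
  rw [smul_zero, add_zero] at this
  exact this

lemma odd_U (hq0 : (q : K) = 0) (i m : ℕ) (hm : m ≤ i) :
    alphaQ K q (2 * i + 1) (eZ K q (2 * i + 1) (2 * m : ℕ)) = eZ K q (2 * i + 1) (2 * m : ℕ)
      + Nel K q (bEl K q) • eZ K q (2 * i + 1) ((2 * m : ℕ) + 1) := by
  exact alpha_q hq0 (2 * i + 1) i (fun l => eZ K q (2 * i + 1) (2 * l : ℕ))
    (fun l => eZ K q (2 * i + 1) ((2 * l : ℕ) + 1)) (bEl K q) 1 1
    (fun n => ∑ t ∈ range n, bEl K q ^ t)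
    (aOU i) (aOV i) sigma_b (by simp)
    (fun n => by simp [Finset.sum_range_succ, sigma_b, add_comm]) m hm b_pow

lemma odd_V (hq0 : (q : K) = 0) (i m : ℕ) (hm : m ≤ i) :
    alphaQ K q (2 * i + 1) (eZ K q (2 * i + 1) ((2 * m : ℕ) + 1)) = eZ K q (2 * i + 1) ((2 * m : ℕ) + 1) := by
  have := alpha_q hq0 (2 * i + 1) i (fun l => eZ K q (2 * i + 1) ((2 * l : ℕ) + 1))
    (fun l => 0) 1 1 0 (fun _ => 0)
    (fun m hm => by rw [aOV i m hm]; simp) (fun m _ => by rw [map_zero]; simp) (map_one _) rfl (by simp) m hm (one_pow _)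
  rw [smul_zero, add_zero] at this
  exact this

-- all formulas with scalars in the group algebra, indices in ℤ
lemma tau_even_even (d : ℕ) (hd : d % 2 = 0) (j : ℕ) : tauL K q d (eZ K q d (2 * j : ℤ)) =
    (-((j : GrpAlg K q) + 1) * κEl K q) • eZ K q (d + 1) (2 * j + 2 : ℤ) := by
  have := tauL_e (K := K) (q := q) d (2 * j)
  rw [tauB, if_pos hd, if_pos (by omega), show 2 * j / 2 = j by omega,
    ← algebraMap_smul (GrpAlg K q)] at this
  push_cast at this
  rw [this, smul_smul, ← neg_smul, neg_mul]

lemma tau_odd_even (d : ℕ) (hd : d % 2 = 1) (j : ℕ) : tauL K q d (eZ K q d (2 * j : ℤ)) =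
    (-((j : GrpAlg K q) + 1)) • eZ K q (d + 1) (2 * j + 2 : ℤ) := by
  have := tauL_e (K := K) (q := q) d (2 * j)
  rw [tauB, if_neg (by omega), if_pos (by omega), show 2 * j / 2 = j by omega,
    ← algebraMap_smul (GrpAlg K q)] at this
  push_cast at this
  rw [this, ← neg_smul]

lemma tau_even_odd (d : ℕ) (hd : d % 2 = 0) (j : ℕ) : tauL K q d (eZ K q d (2 * j + 1 : ℤ)) =
    (-((j : GrpAlg K q) + 1)) • eZ K q (d + 1) (2 * j + 3 : ℤ) := by
  have := tauL_e (K := K) (q := q) d (2 * j + 1)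
  rw [tauB, if_pos hd, if_neg (by omega), show (2 * j + 1) / 2 = j by omega,
    ← algebraMap_smul (GrpAlg K q)] at this
  push_cast at this
  rw [this, ← neg_smul, add_assoc (2 * (j : ℤ))]; rfl

lemma tau_odd_odd (d : ℕ) (hd : d % 2 = 1) (j : ℕ) : tauL K q d (eZ K q d (2 * j + 1 : ℤ)) =
    (-((j : GrpAlg K q) + 1) * κEl K q) • eZ K q (d + 1) (2 * j + 3 : ℤ) := by
  have := tauL_e (K := K) (q := q) d (2 * j + 1)
  rw [tauB, if_neg (by omega), if_neg (by omega), show (2 * j + 1) / 2 = j by omega,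
    ← algebraMap_smul (GrpAlg K q)] at this
  push_cast at this
  rw [this, smul_smul, ← neg_smul, neg_mul, add_assoc (2 * (j : ℤ))]; rfl

lemma tau_even_pred (d : ℕ) (hd : d % 2 = 0) (j : ℕ) : tauL K q d (eZ K q d (2 * j - 1 : ℤ)) =
    (-(j : GrpAlg K q)) • eZ K q (d + 1) (2 * j + 1 : ℤ) := by
  cases j with
  | zero => rw [h_eZ_neg _ _ (by simp)]; simp
  | succ j =>
    have := tau_even_odd (K := K) (q := q) d hd j
    push_cast
    rw [show (2 * ((j : ℤ) + 1) - 1) = 2 * j + 1 by ring, this]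
    congr 2

lemma tau_odd_pred (d : ℕ) (hd : d % 2 = 1) (j : ℕ) : tauL K q d (eZ K q d (2 * j - 1 : ℤ)) =
    (-(j : GrpAlg K q) * κEl K q) • eZ K q (d + 1) (2 * j + 1 : ℤ) := by
  cases j with
  | zero => rw [h_eZ_neg _ _ (by simp)]; simp
  | succ j =>
    have := tau_odd_odd (K := K) (q := q) d hd j
    push_cast
    rw [show (2 * ((j : ℤ) + 1) - 1) = 2 * j + 1 by ring, this]
    congr 2

-- the parameter k is the degree of the target
lemma del_odd_even (k : ℕ) (hk : k % 2 = 1) (j : ℕ) : delL K q k (eZ K q (k + 1) (2 * j : ℤ)) =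
    Nel K q (aEl K q) • eZ K q k (2 * j : ℤ) + Nel K q (bEl K q) • eZ K q k (2 * j - 1 : ℤ) := by
  have := delL_e (K := K) (q := q) k (2 * j)
  rw [delB, if_pos (by omega), if_pos (by omega)] at this
  exact_mod_cast this

lemma del_odd_odd (k : ℕ) (hk : k % 2 = 1) (j : ℕ) : delL K q k (eZ K q (k + 1) (2 * j + 1 : ℤ)) =
    (aEl K q - 1) • eZ K q k (2 * j + 1 : ℤ) - (bEl K q - 1) • eZ K q k (2 * j : ℤ) := by
  have := delL_e (K := K) (q := q) k (2 * j + 1)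
  rw [delB, if_pos (by omega), if_neg (by omega)] at this
  push_cast at this
  rw [this, add_sub_cancel_right]

lemma del_even_even (k : ℕ) (hk : k % 2 = 0) (j : ℕ) : delL K q k (eZ K q (k + 1) (2 * j : ℤ)) =
    (aEl K q - 1) • eZ K q k (2 * j : ℤ) - Nel K q (bEl K q) • eZ K q k (2 * j - 1 : ℤ) := by
  have := delL_e (K := K) (q := q) k (2 * j)
  rw [delB, if_neg (by omega), if_pos (by omega)] at this
  exact_mod_cast this

lemma del_even_odd (k : ℕ) (hk : k % 2 = 0) (j : ℕ) : delL K q k (eZ K q (k + 1) (2 * j + 1 : ℤ)) =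
    Nel K q (aEl K q) • eZ K q k (2 * j + 1 : ℤ) + (bEl K q - 1) • eZ K q k (2 * j : ℤ) := by
  have := delL_e (K := K) (q := q) k (2 * j + 1)
  rw [delB, if_neg (by omega), if_neg (by omega)] at this
  push_cast at this
  rw [this, add_sub_cancel_right]

lemma main_e (hq0 : (q : K) = 0) (k j : ℕ) (hj : j ≤ k + 1) :
    delL K q (k + 1) (tauL K q (k + 1) (eZ K q (k + 1) (j : ℤ))) +
      tauL K q k (delL K q k (eZ K q (k + 1) (j : ℤ))) =
    eZ K q (k + 1) (j : ℤ) - alphaQ K q (k + 1) (eZ K q (k + 1) (j : ℤ)) := by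
  have hκ := kappa_a (K := K) (q := q) hq0
  obtain ⟨m, rfl | rfl⟩ := Nat.even_or_odd' j
  · have e1 : (2 * (m : ℤ) + 2) = 2 * ((m + 1 : ℕ) : ℤ) := by push_cast; ring
    have e2 : (2 * ((m + 1 : ℕ) : ℤ) - 1) = 2 * (m : ℤ) + 1 := by push_cast; ring
    obtain ⟨i, hi | hi⟩ := Nat.even_or_odd' (k + 1)
    · have ha : alphaQ K q (k + 1) (eZ K q (k + 1) (2 * m : ℕ)) = eZ K q (k + 1) (2 * m : ℕ)
          - (κEl K q * Nel K q (bEl K q)) • eZ K q (k + 1) ((2 * m : ℕ) + 1) := by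
        rw [hi]; exact even_U hq0 i m (by omega)
      rw [ha]
      push_cast
      rw [tau_even_even _ (by omega), map_smul, e1, del_even_even _ (by omega), del_odd_even _ (by omega),
        map_add, map_smul, map_smul, tau_odd_even _ (by omega), tau_odd_pred _ (by omega), e1, e2]
      have hN : Nel K q (aEl K q) = - ((aEl K q - 1) * κEl K q) := by rw [hκ, neg_neg]
      rw [hN]
      module
    · have ha : alphaQ K q (k + 1) (eZ K q (k + 1) (2 * m : ℕ)) = eZ K q (k + 1) (2 * m : ℕ)
          + Nel K q (bEl K q) • eZ K q (k + 1) ((2 * m : ℕ) + 1) := by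
        rw [hi]; exact odd_U hq0 i m (by omega)
      rw [ha]
      push_cast
      rw [tau_odd_even _ (by omega), map_smul, e1, del_odd_even _ (by omega), del_even_even _ (by omega),
        map_sub, map_smul, map_smul, tau_even_even _ (by omega), tau_even_pred _ (by omega), e1, e2]
      have hN : Nel K q (aEl K q) = - ((aEl K q - 1) * κEl K q) := by rw [hκ, neg_neg]
      rw [hN]
      module
  · have e1 : (2 * (m : ℤ) + 3) = 2 * ((m + 1 : ℕ) : ℤ) + 1 := by push_cast; ring
    have e2 : (2 * (m : ℤ) + 2) = 2 * ((m + 1 : ℕ) : ℤ) := by push_cast; ring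
    have hN : Nel K q (aEl K q) = - ((aEl K q - 1) * κEl K q) := by rw [hκ, neg_neg]
    have ha : alphaQ K q (k + 1) (eZ K q (k + 1) ((2 * m + 1 : ℕ) : ℤ)) = eZ K q (k + 1) ((2 * m + 1 : ℕ) : ℤ) := by
      obtain ⟨i, hi | hi⟩ := Nat.even_or_odd' (k + 1)
      · rw [hi]; exact even_V hq0 i m (by omega)
      · rw [hi]; exact odd_V hq0 i m (by omega)
    rw [ha]
    push_cast
    rcases Nat.mod_two_eq_zero_or_one k with hk | hk
    · rw [tau_odd_odd _ (by omega), map_smul, e1, del_odd_odd _ (by omega), del_even_odd _ (by omega),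
        map_add, map_smul, map_smul, tau_even_odd _ (by omega), tau_even_even _ (by omega), e1, e2, hN]
      module
    · rw [tau_even_odd _ (by omega), map_smul, e1, del_even_odd _ (by omega), del_odd_odd _ (by omega),
        map_sub, map_smul, map_smul, tau_odd_odd _ (by omega), tau_odd_even _ (by omega), e1, e2, hN]
      module

end helpers

/-- for an odd prime `p`, `n ≥ 2`, `q = p^n` and `K` of characteristic `p`,
the maps `α` and `τ` satisfy `∂ ∘ τ + τ ∘ ∂ = 1 − α^q` on the complex `P_•` (in degree `0`
the term `τ ∘ ∂` is interpreted as `0`), where `α^q` is the `q`-fold composite of `α`. -/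
theorem stmt15 (p n : ℕ) (hp : p.Prime) (hodd : Odd p) (hn : 2 ≤ n)
    (hchar : CharP K p) (hq : q = p ^ n) :
    (∀ x : PmodV K q 0,
      delMap K q 0 (tauMap K q 0 x) = x - (alphaMap K q 0)^[q] x) ∧
    (∀ (k : ℕ) (x : PmodV K q (k + 1)),
      delMap K q (k + 1) (tauMap K q (k + 1) x) + tauMap K q k (delMap K q k x) =
        x - (alphaMap K q (k + 1))^[q] x) := by
  have hq0 : (q : K) = 0 := by
    rw [hq, Nat.cast_pow, CharP.cast_eq_zero, zero_pow (by omega)]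
  constructor
  · intro x
    refine lin_ext 0 ((delL K q 0).comp (tauL K q 0)) (LinearMap.id - alphaQ K q 0) ?_ x
    intro j hj
    obtain rfl : j = 0 := by omega
    have h1 := tau_even_even (K := K) (q := q) 0 rfl 0
    have h2 := even_U (K := K) (q := q) hq0 0 0 le_rfl
    rw [h_eZ_big (0 + 1) _ (by simp)] at h1
    rw [h_eZ_big _ (((2 * 0 : ℕ) : ℤ) + 1) (by simp)] at h2
    simp only [Nat.cast_zero, mul_zero, smul_zero, sub_zero] at h1 h2
    simp only [LinearMap.comp_apply, LinearMap.sub_apply, LinearMap.id_apply, Nat.cast_zero]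
    rw [h1, map_zero]
    exact (sub_eq_zero.mpr h2.symm).symm
  · intro k x
    exact lin_ext (k + 1) ((delL K q (k + 1)).comp (tauL K q (k + 1)) + (tauL K q k).comp (delL K q k))
      (LinearMap.id - alphaQ K q (k + 1)) (fun j hj => main_e hq0 k j hj) x
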